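/- Let R ⊂ S be an integral FCP ring extension and let T ∈ [R,S] be the t-closure of R in S (i.e., R ⊆ T is infra-integral and T ⊆ S is t-closed). For any maximal chain 𝒞 of [R,S] from R to S, there exists a maximal chain 𝒞′ of [R,S] from R to S containing T such that the length of 𝒞′ is greater than or equal to the length of 𝒞. -/

import Mathlib

/-!
The idea is to push a maximal chain `c` from `R` to `S` to the two chains `c i ⊓ T`, from `R`
to `T`, and `c i ⊔ T`, from `T` to `S`. If no step of `c` is lost in both of them, then refining
both to maximal chains and concatenating gives a maximal chain through `T` at least as long as
`c` (`exists_maxChain_through`). So everything reduces to a cancellation property of `T`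
(`eq_of_sup_eq_of_inf_eq`): if `A ≤ B`, `A ⊔ T = B ⊔ T` and `A ⊓ T = B ⊓ T`, then `A = B`.

To see this, put `C = A ⊓ T = B ⊓ T`, which is t-closed in `B` because `T` is t-closed in `S`.

* If `A` is t-closed in `B` and `B` covers `A`, then some maximal ideal `J` of `B` is contained
  in `A` (`exists_maximal_of_covBy`). By Nakayama, a maximal ideal `M` of `A` satisfies
  `MB = M`; then `B / M` is Artinian, and by t-closedness it is reduced with only trivial
  idempotents, hence a field.
* t-closedness in `B` passes from `C` to any `C' ≤ B` covering `C`
  (`TClosedBetween.of_covBy`), hence by induction to every ring between `C` and `B`, in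
  particular to `A`.
* If `A ≠ B`, take `B' ≤ B` covering `A`, the ideal `J` of `B'` as above, and a maximal ideal
  `N` of `S` over `J`. As `R ⊆ T` is infra-integral, `T ⊆ R + N`, so
  `B' ⊆ B ⊔ T = A ⊔ T ⊆ A + N`. Since `N ∩ B' = J ⊆ A`, this forces `B' ⊆ A`, a contradiction.
-/

/-- A maximal chain of length `n` from `T` to `U`: each step is a covering. -/
def IsMaxChainFromTo {α : Type*} [PartialOrder α] (T U : α) (n : ℕ)
    (c : Fin (n + 1) → α) : Prop :=
  c 0 = T ∧ c (Fin.last n) = U ∧ ∀ i : Fin n, c i.castSucc ⋖ c i.succ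

/-- The subextension determined by `T ≤ U` is catenarian: all maximal chains from
`T` to `U` have the same length. -/
def IsCatenarianFromTo {α : Type*} [PartialOrder α] (T U : α) : Prop :=
  ∀ (n m : ℕ) (c : Fin (n + 1) → α) (d : Fin (m + 1) → α),
    IsMaxChainFromTo T U n c → IsMaxChainFromTo T U m d → n = m

/-- The extension `R ⊆ S` has FCP: every chain of `R`-subalgebras of `S` is finite. -/
def IsFCPExt (R S : Type*) [CommRing R] [CommRing S] [Algebra R S] : Prop :=
  ∀ C : Set (Subalgebra R S), IsChain (· ≤ ·) C → C.Finite

/-- The extension `R ⊆ S` is catenarian. -/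
def IsCatenarianExt (R S : Type*) [CommRing R] [CommRing S] [Algebra R S] : Prop :=
  IsCatenarianFromTo (⊥ : Subalgebra R S) ⊤

/-- The length `ℓ[T,U]`: the supremum of lengths of chains from `T` to `U`. -/
noncomputable def extLength {α : Type*} [PartialOrder α] (T U : α) : ℕ :=
  sSup {n | ∃ c : Fin (n + 1) → α, StrictMono c ∧ c 0 = T ∧ c (Fin.last n) = U}

/-- The residual extension `κ_R(P) → κ_S(Q)` (for `P = Q ∩ R`) is an isomorphism. -/
def ResidualExtIsIso {R S : Type*} [CommRing R] [CommRing S] (f : R →+* S)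
    (Q : Ideal S) [Q.IsPrime] : Prop :=
  Function.Bijective
    (IsLocalRing.ResidueField.map
      (Localization.localRingHom (Q.comap f) Q f rfl))

/-- `R ⊆ S` is infra-integral: it is integral and all residual extensions
are isomorphisms. -/
def IsInfraIntegral (R S : Type*) [CommRing R] [CommRing S] [Algebra R S] : Prop :=
  Algebra.IsIntegral R S ∧
    ∀ (Q : Ideal S) (_ : Q.IsPrime), ResidualExtIsIso (algebraMap R S) Q

/-- The subextension `T ⊆ S` is t-closed. -/
def IsTClosedIn {R S : Type*} [CommRing R] [CommRing S] [Algebra R S]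
    (T : Subalgebra R S) : Prop :=
  ∀ (b : S), ∀ r ∈ T, b ^ 2 - r * b ∈ T → b ^ 3 - r * b ^ 2 ∈ T → b ∈ T

/-- `T` is the t-closure of `R` in `S`: `R ⊆ T` is infra-integral and `T ⊆ S`
is t-closed. -/
def IsTClosure {R S : Type*} [CommRing R] [CommRing S] [Algebra R S]
    (T : Subalgebra R S) : Prop :=
  IsInfraIntegral R T ∧ IsTClosedIn T

/-! ### Covering extensions with t-closed base -/

theorem field_of_artinian {Q : Type*} [CommRing Q] [IsArtinianRing Q] [Nontrivial Q]
    (hred : ∀ z : Q, z ^ 2 = 0 → z = 0) (hid : ∀ e : Q, e ^ 2 = e → e = 0 ∨ e = 1) :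
    IsField Q := by
  have hR : IsReduced Q := ⟨fun x hx => by
    by_contra h
    obtain ⟨n, hn⟩ := hx
    induction n using Nat.strong_induction_on with
    | _ n ih =>
      rcases Nat.lt_or_ge n 2 with h2 | h2
      · interval_cases n
        · simp at hn
        · simp at hn; exact h hn
      · refine ih (n-1) (by omega) (hred _ ?_)
        rw [← pow_mul]
        exact pow_eq_zero_of_le (by omega) hn⟩
  refine ⟨exists_pair_ne Q, mul_comm, fun {z} hz => ?_⟩
  -- From `zⁿ = zⁿ⁺¹ w` one gets `zⁿ = z²ⁿ wⁿ`, so `zⁿ wⁿ` is idempotent.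
  obtain ⟨n, w, hw⟩ := IsArtinian.exists_pow_succ_smul_dvd z (1 : Q)
  simp only [smul_eq_mul, mul_one] at hw
  have key : ∀ k, z ^ n = z ^ (n + k) * w ^ k := by
    intro k
    induction k with
    | zero => simp
    | succ k ih => 
      calc z ^ n = z ^ (n + k) * w ^ k := ih
        _ = z ^ n * (z ^ k * w ^ k) := by ring
        _ = (z ^ (n+1) * w) * (z ^ k * w ^ k) := by rw [show z ^ (n+1) * w = z ^ n from hw]
        _ = _ := by ring
  have hk := key n
  rcases hid (z ^ n * w ^ n) (by
    calc (z ^ n * w ^ n) ^ 2 = (z ^ (n + n) * w ^ n) * w ^ n := by ring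
      _ = _ := by rw [← hk]) with h0 | h1
  · exfalso
    apply hz
    apply hR.eq_zero
    refine ⟨n, ?_⟩
    rw [hk, pow_add, mul_assoc, h0, mul_zero]
  · rw [← mul_pow] at h1
    rcases n with _ | n
    · refine ⟨w, ?_⟩
      simpa using hw
    · exact ⟨w * (z * w) ^ n, by rw [← h1]; ring⟩

/-- An integral extension `A ⊂ B` without proper intermediate rings is finite, and some maximal
ideal of `A` is also an ideal of `B`. -/
theorem exists_maximal_conductor {A B : Type*} [CommRing A] [CommRing B] [Algebra A B]
    [Algebra.IsIntegral A B] (hinj : Function.Injective (algebraMap A B))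
    (hcov : (⊥ : Subalgebra A B) ⋖ ⊤) :
    Module.Finite A B ∧ ∃ M : Ideal A, M.IsMaximal ∧ ∀ m ∈ M, ∀ b : B, ∃ m' ∈ M,
      algebraMap A B m * b = algebraMap A B m' := by
  have hsimple : ∀ U : Subalgebra A B, U = ⊥ ∨ U = ⊤ := fun U =>
    (hcov.eq_or_eq bot_le le_top)
  obtain ⟨y, -, hy⟩ := SetLike.exists_of_lt hcov.lt
  have hfin : Module.Finite A B := by
    rcases hsimple (Algebra.adjoin A {y}) with h | h
    · exact absurd (h ▸ Algebra.self_mem_adjoin_singleton A y) hy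
    · have := (Algebra.IsIntegral.isIntegral (R := A) y).fg_adjoin_singleton
      rw [h] at this
      exact ⟨by simpa using this⟩
  refine ⟨hfin, ?_⟩
  -- `I` is the conductor of `A` in `B`.
  let I : Ideal A :=
    { carrier := {a | ∀ b : B, algebraMap A B a * b ∈ (⊥ : Subalgebra A B)}
      add_mem' := fun ha hb x => by
        rw [map_add, add_mul]; exact add_mem (ha x) (hb x)
      zero_mem' := fun x => by simp [zero_mem]
      smul_mem' := fun c a ha x => by
        rw [smul_eq_mul, map_mul, mul_assoc]
        exact mul_mem (Subalgebra.algebraMap_mem _ c) (ha x) }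
  have hI : I ≠ ⊤ := fun h => hy <| by
    have h1 : (1 : A) ∈ I := h ▸ Submodule.mem_top
    simpa using h1 y
  obtain ⟨M, hM, hIM⟩ := Ideal.exists_le_maximal I hI
  -- The subalgebra `A + MB`.
  let U : Subalgebra A B :=
    { carrier := {x | ∃ a : A, x - algebraMap A B a ∈ M.map (algebraMap A B)}
      mul_mem' := by
        rintro x y ⟨a, ha⟩ ⟨b, hb⟩
        refine ⟨a * b, ?_⟩
        have : x * y - algebraMap A B (a * b)
          = y * (x - algebraMap A B a) + algebraMap A B a * (y - algebraMap A B b) := by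
            rw [map_mul]; ring
        rw [this]
        exact add_mem (Ideal.mul_mem_left _ _ ha) (Ideal.mul_mem_left _ _ hb)
      add_mem' := by
        rintro x y ⟨a, ha⟩ ⟨b, hb⟩
        refine ⟨a + b, ?_⟩
        have : x + y - algebraMap A B (a + b)
          = (x - algebraMap A B a) + (y - algebraMap A B b) := by
            rw [map_add]; ring
        rw [this]
        exact add_mem ha hb
      algebraMap_mem' := fun r => ⟨r, by simp⟩ }
  -- If `A + MB = B`, Nakayama applied to `B / A` yields an element of `1 + M` in the conductor.
  have hU : U = ⊥ := by
    refine (hsimple U).resolve_right fun hU => ?_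
    let X := B ⧸ (Subalgebra.toSubmodule (⊥ : Subalgebra A B))
    obtain ⟨r, hr, hr0⟩ := Submodule.exists_sub_one_mem_and_smul_eq_zero_of_fg_of_le_smul M
      (⊤ : Submodule A X) Module.Finite.fg_top (by
        intro x _
        obtain ⟨b, rfl⟩ := Submodule.mkQ_surjective _ x
        obtain ⟨a, ha⟩ : b ∈ U := hU ▸ Algebra.mem_top
        have h1 : ∀ z ∈ M.map (algebraMap A B),
            (Subalgebra.toSubmodule (⊥ : Subalgebra A B)).mkQ z ∈ M • (⊤ : Submodule A X) := by
          intro z hz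
          have hz' : z ∈ (M.map (algebraMap A B)).restrictScalars A := hz
          rw [← Ideal.smul_top_eq_map] at hz'
          have := Submodule.mem_map_of_mem
            (f := (Subalgebra.toSubmodule (⊥ : Subalgebra A B)).mkQ) hz'
          rw [Submodule.map_smul''] at this
          exact Submodule.smul_mono le_rfl le_top this
        have h2 := h1 _ ha
        rw [map_sub] at h2
        have h3 : (Subalgebra.toSubmodule (⊥ : Subalgebra A B)).mkQ (algebraMap A B a) = 0 := by
          rw [Submodule.mkQ_apply, Submodule.Quotient.mk_eq_zero]
          exact Subalgebra.algebraMap_mem _ a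
        rwa [h3, sub_zero] at h2)
    have hrI : r ∈ I := fun b => by
      have := hr0 (Submodule.mkQ _ b) trivial
      rw [← map_smul, Submodule.mkQ_apply, Submodule.Quotient.mk_eq_zero, Algebra.smul_def] at this
      exact this
    apply hM.ne_top
    rw [Ideal.eq_top_iff_one]
    simpa using sub_mem (hIM hrI) hr
  refine ⟨M, hM, fun m hm b => ?_⟩
  obtain ⟨Q, hQ, hQM⟩ := Ideal.exists_ideal_over_maximal_of_isIntegral (S := B) M (by
    rw [(RingHom.injective_iff_ker_eq_bot _).mp hinj]; exact bot_le)
  have : algebraMap A B m * b ∈ U :=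
    ⟨0, by simpa using Ideal.mul_mem_right _ _ (Ideal.mem_map_of_mem _ hm)⟩
  rw [hU, Algebra.mem_bot] at this
  obtain ⟨a, ha⟩ := this
  refine ⟨a, ?_, ha.symm⟩
  rw [← hQM, Ideal.mem_comap, ha]
  apply Ideal.mul_mem_right
  rwa [← Ideal.mem_comap, hQM]

/-- If moreover `A` is t-closed in `B`, the common ideal is maximal in `B` too: t-closedness
with `r = 0` and `r = 1` makes the quotient reduced and connected. -/
theorem exists_maximal_of_tclosed_cover {A B : Type*} [CommRing A] [CommRing B] [Algebra A B]
    [Algebra.IsIntegral A B] (hinj : Function.Injective (algebraMap A B))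
    (hcov : (⊥ : Subalgebra A B) ⋖ ⊤) (ht : IsTClosedIn (⊥ : Subalgebra A B)) :
    ∃ J : Ideal B, J.IsMaximal ∧ ∀ x ∈ J, x ∈ (⊥ : Subalgebra A B) := by
  obtain ⟨hfin, M, hM, hMB⟩ := exists_maximal_conductor hinj hcov
  let J : Ideal B := M.map (algebraMap A B)
  have hJ : ∀ x, x ∈ J ↔ ∃ m ∈ M, algebraMap A B m = x := by
    intro x
    constructor
    · intro hx
      refine Submodule.span_induction (p := fun x _ => ∃ m ∈ M, algebraMap A B m = x)
        ?_ ⟨0, zero_mem _, map_zero _⟩ ?_ ?_ hx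
      · rintro _ ⟨m, hm, rfl⟩
        exact ⟨m, hm, rfl⟩
      · rintro _ _ _ _ ⟨m, hm, rfl⟩ ⟨m', hm', rfl⟩
        exact ⟨m + m', add_mem hm hm', map_add _ _ _⟩
      · rintro b _ _ ⟨m, hm, rfl⟩
        obtain ⟨m', hm', h⟩ := hMB m hm b
        exact ⟨m', hm', by rw [smul_eq_mul, mul_comm, h]⟩
    · rintro ⟨m, hm, rfl⟩
      exact Ideal.mem_map_of_mem _ hm
  have hJA : ∀ a : A, algebraMap A B a ∈ J ↔ a ∈ M := fun a =>
    ⟨fun h => by obtain ⟨m, hm, h⟩ := (hJ _).1 h; rwa [← hinj h], Ideal.mem_map_of_mem _⟩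
  have hJbot : ∀ x ∈ J, x ∈ (⊥ : Subalgebra A B) := fun x hx => by
    obtain ⟨m, -, rfl⟩ := (hJ x).1 hx
    exact Subalgebra.algebraMap_mem _ m
  refine ⟨J, Ideal.Quotient.maximal_of_isField _ ?_, hJbot⟩
  let _ : Field (A ⧸ M) := Ideal.Quotient.field M
  have : Module.Finite (A ⧸ M) (B ⧸ J) := Module.Finite.of_restrictScalars_finite A _ _
  have : IsArtinianRing (B ⧸ J) := IsArtinianRing.of_finite (A ⧸ M) _
  have : Nontrivial (B ⧸ J) := Ideal.Quotient.nontrivial_iff.2 fun h => hM.ne_top <| by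
    rw [Ideal.eq_top_iff_one, ← hJA, map_one, h]; trivial
  refine field_of_artinian (fun z => ?_) fun e => ?_
  · obtain ⟨z, rfl⟩ := Ideal.Quotient.mk_surjective z
    intro hz
    rw [← map_pow, Ideal.Quotient.eq_zero_iff_mem] at hz
    have hzA : z ∈ (⊥ : Subalgebra A B) := ht z 0 (zero_mem _)
      (by simpa using hJbot _ hz) (by
        rw [zero_mul, sub_zero, pow_succ]
        exact hJbot _ (Ideal.mul_mem_right _ _ hz))
    obtain ⟨a, rfl⟩ := hzA
    change Ideal.Quotient.mk J (algebraMap A B a) = 0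
    change algebraMap A B a ^ 2 ∈ J at hz
    rw [← map_pow, hJA] at hz
    rw [Ideal.Quotient.eq_zero_iff_mem, hJA]
    exact hM.isPrime.mem_of_pow_mem _ hz
  · obtain ⟨e, rfl⟩ := Ideal.Quotient.mk_surjective e
    intro he
    rw [← map_pow, Ideal.Quotient.eq] at he
    have heA : e ∈ (⊥ : Subalgebra A B) := ht e 1 (one_mem _)
      (by simpa using hJbot _ he) (by
        rw [show e ^ 3 - 1 * e ^ 2 = (e ^ 2 - e) * e by ring]
        exact hJbot _ (Ideal.mul_mem_right _ _ he))
    obtain ⟨a, rfl⟩ := heA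
    change Ideal.Quotient.mk J (algebraMap A B a) = 0 ∨ Ideal.Quotient.mk J (algebraMap A B a) = 1
    change algebraMap A B a ^ 2 - algebraMap A B a ∈ J at he
    rw [← map_pow, ← map_sub, hJA, show a ^ 2 - a = a * (a - 1) by ring] at he
    rcases hM.isPrime.mem_or_mem he with h | h
    · left; rwa [Ideal.Quotient.eq_zero_iff_mem, hJA]
    · right
      rw [← map_one (Ideal.Quotient.mk J), Ideal.Quotient.eq, ← map_one (algebraMap A B),
        ← map_sub, hJA]
      exact h

/-- `A` is t-closed in `B`, for two subalgebras of `S`: the defining condition of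
`IsTClosedIn`, tested on elements of `B` only. -/
def TClosedBetween {R S : Type*} [CommRing R] [CommRing S] [Algebra R S]
    (A B : Subalgebra R S) : Prop :=
  ∀ b ∈ B, ∀ r ∈ A, b ^ 2 - r * b ∈ A → b ^ 3 - r * b ^ 2 ∈ A → b ∈ A

section Subalgebras

variable {R S : Type*} [CommRing R] [CommRing S] [Algebra R S]

/-- `exists_maximal_of_tclosed_cover` for two subalgebras of `S`. -/
theorem exists_maximal_of_covBy (hint : Algebra.IsIntegral R S) {A B : Subalgebra R S}
    (hcov : A ⋖ B) (ht : TClosedBetween A B) :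
    ∃ J : Ideal B, J.IsMaximal ∧ ∀ x ∈ J, (x : S) ∈ A := by
  let _ : Algebra A B := (Subalgebra.inclusion hcov.le).toRingHom.toAlgebra
  have hmap : ∀ a : A, ((algebraMap A B a : B) : S) = a := fun _ => rfl
  have hbot : ∀ x : B, x ∈ (⊥ : Subalgebra A B) ↔ (x : S) ∈ A := fun x =>
    ⟨by rintro ⟨a, rfl⟩; exact a.2, fun h => ⟨⟨x, h⟩, rfl⟩⟩
  have : IsScalarTower R A B := IsScalarTower.of_algebraMap_eq fun _ => rfl
  have : Algebra.IsIntegral R B := Algebra.IsIntegral.of_injective B.val Subtype.val_injective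
  have : Algebra.IsIntegral A B := Algebra.IsIntegral.tower_top R
  have hinj : Function.Injective (algebraMap A B) := Subalgebra.inclusion_injective hcov.le
  have hcov' : (⊥ : Subalgebra A B) ⋖ ⊤ := by
    refine ⟨lt_of_le_not_ge bot_le fun h => ?_, fun U hU hU' => ?_⟩
    · exact hcov.lt.not_ge fun x hx => (hbot ⟨x, hx⟩).1 (h Algebra.mem_top)
    · let V : Subalgebra R S := (U.restrictScalars R).map B.val
      have hV : ∀ x : B, (x : S) ∈ V ↔ x ∈ U := fun x =>
        ⟨by rintro ⟨y, hy, h⟩; rwa [← Subtype.ext h], fun h => ⟨x, h, rfl⟩⟩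
      have hVB : V ≤ B := by rintro _ ⟨y, -, rfl⟩; exact y.2
      have hAV : A ≤ V := fun a ha => ⟨⟨a, hcov.le ha⟩, U.algebraMap_mem ⟨a, ha⟩, rfl⟩
      rcases hcov.eq_or_eq hAV hVB with h | h
      · exact hU.not_ge fun x hx => (hbot x).2 (h ▸ (hV x).2 hx)
      · exact hU'.not_ge fun x _ => (hV x).1 (h.symm ▸ x.2)
  obtain ⟨J, hJ, hJA⟩ := exists_maximal_of_tclosed_cover hinj hcov' (by
    intro b r hr h2 h3
    rw [hbot] at *
    exact ht b b.2 r hr h2 h3)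
  exact ⟨J, hJ, fun x hx => (hbot x).1 (hJA x hx)⟩

/-! ### Propagation of t-closedness and cancellation -/

theorem TClosedBetween.of_covBy (hint : Algebra.IsIntegral R S) {C C' B : Subalgebra R S}
    (hcov : C ⋖ C') (hC'B : C' ≤ B) (ht : TClosedBetween C B) : TClosedBetween C' B := by
  have htC : TClosedBetween C C' := fun b hb => ht b (hC'B hb)
  obtain ⟨J, hJ, hJC⟩ := exists_maximal_of_covBy hint hcov htC
  -- `M` is `J` viewed as a subset of `S`.
  let M : Set S := {x | ∃ h : x ∈ C', (⟨x, h⟩ : C') ∈ J}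
  have hMC : ∀ x ∈ M, x ∈ C := fun x ⟨_, hx⟩ => hJC _ hx
  have hMadd : ∀ x ∈ M, ∀ y ∈ M, x + y ∈ M := fun x ⟨h, hx⟩ y ⟨h', hy⟩ =>
    ⟨add_mem h h', J.add_mem hx hy⟩
  have hMmul : ∀ x ∈ M, ∀ y ∈ C', x * y ∈ M := fun x ⟨h, hx⟩ y h' =>
    ⟨mul_mem h h', J.mul_mem_right ⟨y, h'⟩ hx⟩
  have hinv : ∀ x ∈ C', x ∉ M → ∃ y ∈ C', ∃ m ∈ M, x * y = 1 + m := by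
    intro x hx hxM
    have hx' : (⟨x, hx⟩ : C') ∉ J := fun h => hxM ⟨hx, h⟩
    obtain ⟨y, m, hm, h⟩ := hJ.exists_inv hx'
    refine ⟨y, y.2, -m, ⟨neg_mem m.2, J.neg_mem hm⟩, ?_⟩
    have := congrArg Subtype.val h
    push_cast at this
    linear_combination this
  intro b hb r hr h2 h3
  by_contra hbC'
  have hbC : b ∉ C := fun h => hbC' (hcov.le h)
  have hMbC : ∀ m ∈ M, m * b ∈ C := by
    intro m hm
    refine ht _ (mul_mem (hC'B (hcov.le (hMC m hm))) hb) (m * r) (hMC _ (hMmul m hm r hr)) ?_ ?_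
    · rw [show (m * b) ^ 2 - m * r * (m * b) = m * (m * (b ^ 2 - r * b)) by ring]
      exact mul_mem (hMC m hm) (hMC _ (hMmul m hm _ h2))
    · rw [show (m * b) ^ 3 - m * r * (m * b) ^ 2 = m * (m * (m * (b ^ 3 - r * b ^ 2))) by ring]
      exact mul_mem (hMC m hm) (mul_mem (hMC m hm) (hMC _ (hMmul m hm _ h3)))
  have hMb : ∀ m ∈ M, m * b ∈ M := by
    intro m hm
    by_contra hmb
    obtain ⟨y, hy, m', hm', h⟩ := hinv _ (hcov.le (hMbC m hm)) hmb
    apply hbC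
    -- `b = (1 + m')b - m'b` and `(1 + m')b = (my)b² = (myr)b + my(b² - rb)`.
    have hmy := hMmul m hm y hy
    have e : b = m * y * r * b + m * y * (b ^ 2 - r * b) - m' * b := by
      linear_combination (-b) * h
    rw [e]
    exact sub_mem (add_mem (hMbC _ (hMmul _ hmy r hr)) (hMC _ (hMmul _ hmy _ h2))) (hMbC m' hm')
  have hu : b ^ 2 - r * b ∈ M := by
    by_contra hu
    obtain ⟨y, hy, m, hm, h⟩ := hinv _ h2 hu
    apply hbC'
    have e : b = (b ^ 3 - r * b ^ 2) * y - m * b := by linear_combination (-b) * h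
    rw [e]
    exact sub_mem (mul_mem h3 hy) (hcov.le (hMbC m hm))
  by_cases hrM : r ∈ M
  · have hb2 : b ^ 2 ∈ M := by
      rw [show b ^ 2 = (b ^ 2 - r * b) + r * b by ring]
      exact hMadd _ hu _ (hMb r hrM)
    refine hbC (ht b hb 0 (zero_mem _) ?_ ?_)
    · simpa using hMC _ hb2
    · rw [show b ^ 3 - 0 * b ^ 2 = b ^ 2 * b by ring]
      exact hMC _ (hMb _ hb2)
  · obtain ⟨y, hy, m, hm, h⟩ := hinv r hr hrM
    -- As `y` inverts `r` modulo `M`, the element `yb` is idempotent modulo `M`.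
    have he : (y * b) ^ 2 - y * b ∈ M := by
      rw [show (y * b) ^ 2 - y * b = (b ^ 2 - r * b) * (y * y) + (m * b) * y by
        linear_combination (y * b) * h]
      exact hMadd _ (hMmul _ hu _ (mul_mem hy hy)) _ (hMmul _ (hMb m hm) _ hy)
    have heC : y * b ∈ C := by
      refine ht _ (mul_mem (hC'B hy) hb) 1 (one_mem _) ?_ ?_
      · simpa using hMC _ he
      · rw [show (y * b) ^ 3 - 1 * (y * b) ^ 2 = ((y * b) ^ 2 - y * b) * b * y by ring]
        exact hMC _ (hMmul _ (hMb _ he) _ hy)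
    apply hbC'
    rw [show b = r * (y * b) - m * b by linear_combination (-b) * h]
    exact sub_mem (mul_mem hr (hcov.le heC)) (hcov.le (hMbC m hm))

theorem TClosedBetween.of_le (hint : Algebra.IsIntegral R S) [WellFoundedLT (Subalgebra R S)]
    [WellFoundedGT (Subalgebra R S)] {B : Subalgebra R S} (A : Subalgebra R S) (hAB : A ≤ B)
    (C : Subalgebra R S) (hCA : C ≤ A) (ht : TClosedBetween C B) : TClosedBetween A B := by
  induction C using WellFoundedGT.induction with
  | _ C ih =>
    rcases hCA.eq_or_lt with rfl | hlt
    · exact ht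
    · obtain ⟨C', hcov, hC'⟩ := exists_covBy_le_of_lt hlt
      exact ih C' hcov.lt hC' (ht.of_covBy hint hcov (hC'.trans hAB))

/-- In an infra-integral extension `A ⊆ B`, `B = A + Q` for every maximal ideal `Q` of `B`. -/
theorem exists_sub_mem_of_infraIntegral {A B : Type*} [CommRing A] [CommRing B] [Algebra A B]
    (h : IsInfraIntegral A B) (Q : Ideal B) [hQ : Q.IsMaximal] (t : B) :
    ∃ r : A, t - algebraMap A B r ∈ Q := by
  obtain ⟨hint, hres⟩ := h
  have hP : (Q.comap (algebraMap A B)).IsMaximal :=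
    Ideal.isMaximal_comap_of_isIntegral_of_isMaximal Q
  obtain ⟨z, hz⟩ := (hres Q hQ.isPrime).2
    (IsLocalRing.residue _ (algebraMap B (Localization.AtPrime Q) t))
  obtain ⟨z, rfl⟩ := IsLocalRing.residue_surjective z
  rw [IsLocalRing.ResidueField.map_residue] at hz
  obtain ⟨a, s, rfl⟩ := IsLocalization.exists_mk'_eq (Q.comap (algebraMap A B)).primeCompl z
  -- Clear the denominator: `z = a / s` gives `a ≡ s t` modulo `Q`.
  have h1 := congrArg (IsLocalRing.residue (Localization.AtPrime Q)
    (algebraMap B (Localization.AtPrime Q) (algebraMap A B s)) * ·) hz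
  simp only [← map_mul] at h1
  rw [← Localization.localRingHom_to_map (Q.comap (algebraMap A B)) Q (algebraMap A B) rfl,
    ← map_mul, mul_comm,
    IsLocalization.mk'_spec, Localization.localRingHom_to_map] at h1
  have h2 : algebraMap A B a - algebraMap A B s * t ∈ Q := by
    rw [← sub_eq_zero, ← map_sub, ← map_sub, IsLocalRing.residue_eq_zero_iff] at h1
    exact (IsLocalization.AtPrime.to_map_mem_maximal_iff (Localization.AtPrime Q) Q _).1 h1
  obtain ⟨s', p, hp, hs'⟩ := hP.exists_inv s.2
  refine ⟨s' * a, ?_⟩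
  have h3 := congrArg (algebraMap A B) hs'
  simp only [map_add, map_mul, map_one] at h3
  have e : t - algebraMap A B (s' * a) = t * algebraMap A B p
      - algebraMap A B s' * (algebraMap A B a - algebraMap A B s * t) := by
    rw [map_mul]; linear_combination (-t) * h3
  rw [e]
  exact sub_mem (Q.mul_mem_left _ hp) (Q.mul_mem_left _ h2)

/-- The t-closure satisfies the cancellation property that excludes pentagons with side `T`. -/
theorem eq_of_sup_eq_of_inf_eq (hint : Algebra.IsIntegral R S) [WellFoundedLT (Subalgebra R S)]
    [WellFoundedGT (Subalgebra R S)] {T A B : Subalgebra R S} (hT : IsTClosure T) (hAB : A ≤ B)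
    (hsup : A ⊔ T = B ⊔ T) (hinf : A ⊓ T = B ⊓ T) : A = B := by
  by_contra hne
  have hC : TClosedBetween (B ⊓ T) B := fun b hb r hr h2 h3 =>
    ⟨hb, hT.2 b r hr.2 h2.2 h3.2⟩
  have hA : TClosedBetween A B :=
    TClosedBetween.of_le hint A hAB _ (hinf ▸ inf_le_left) hC
  obtain ⟨B', hcov, hB'⟩ := exists_covBy_le_of_lt (lt_of_le_of_ne hAB hne)
  obtain ⟨J, hJ, hJA⟩ := exists_maximal_of_covBy hint hcov fun b hb => hA b (hB' hb)
  have : Algebra.IsIntegral B' S := Algebra.IsIntegral.tower_top R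
  obtain ⟨N, hN, hNJ⟩ := Ideal.exists_ideal_over_maximal_of_isIntegral (S := S) J (by
    rw [(RingHom.injective_iff_ker_eq_bot (algebraMap B' S)).mp Subtype.val_injective]
    exact bot_le)
  have : Algebra.IsIntegral T S := Algebra.IsIntegral.tower_top R
  have hNT : (N.comap (algebraMap T S)).IsMaximal :=
    Ideal.isMaximal_comap_of_isIntegral_of_isMaximal N
  let q : S →ₐ[R] S ⧸ N := Ideal.Quotient.mkₐ R N
  -- `(A.map q).comap q` is `A + N`; it contains `T` since `T ⊆ R + N`.
  have hle : A ⊔ T ≤ (A.map q).comap q := by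
    refine sup_le (fun a ha => ⟨a, ha, rfl⟩) fun t ht => ?_
    obtain ⟨r, hr⟩ := exists_sub_mem_of_infraIntegral hT.1 (N.comap (algebraMap T S)) ⟨t, ht⟩
    refine ⟨algebraMap R S r, A.algebraMap_mem r, ?_⟩
    exact ((Ideal.Quotient.eq (I := N)).2 hr).symm
  refine hcov.lt.not_ge fun y hy => ?_
  obtain ⟨a, ha, hay⟩ : y ∈ (A.map q).comap q := hle (hsup ▸ (le_sup_left : B ≤ B ⊔ T) (hB' hy))
  have hyN : y - a ∈ N := (Ideal.Quotient.eq (I := N)).1 hay.symm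
  have hyJ : (⟨y - a, sub_mem hy (hcov.le ha)⟩ : B') ∈ J := by
    rw [← hNJ]; exact hyN
  simpa using add_mem (hJA _ hyJ) ha

/-! ### Finite chain conditions and saturated chains -/

theorem IsFCPExt.wellFoundedGT (h : IsFCPExt R S) : WellFoundedGT (Subalgebra R S) := by
  refine ⟨RelEmbedding.wellFounded_iff_isEmpty.2 ⟨fun f => ?_⟩⟩
  refine Set.infinite_range_of_injective f.injective (h _ ?_)
  rintro _ ⟨i, rfl⟩ _ ⟨j, rfl⟩ hij
  rcases lt_trichotomy i j with hlt | rfl | hlt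
  · exact Or.inl (f.map_rel_iff.2 hlt).le
  · exact absurd rfl hij
  · exact Or.inr (f.map_rel_iff.2 hlt).le

theorem IsFCPExt.wellFoundedLT (h : IsFCPExt R S) : WellFoundedLT (Subalgebra R S) := by
  refine ⟨RelEmbedding.wellFounded_iff_isEmpty.2 ⟨fun f => ?_⟩⟩
  refine Set.infinite_range_of_injective f.injective (h _ ?_)
  rintro _ ⟨i, rfl⟩ _ ⟨j, rfl⟩ hij
  rcases lt_trichotomy i j with hlt | rfl | hlt
  · exact Or.inr (f.map_rel_iff.2 hlt).le
  · exact absurd rfl hij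
  · exact Or.inl (f.map_rel_iff.2 hlt).le

end Subalgebras

/-- `SatChain x y n`: there is a chain of `n` coverings from `x` to `y`. -/
inductive SatChain {α : Type*} [PartialOrder α] (x : α) : α → ℕ → Prop
  | nil : SatChain x x 0
  | snoc {y z : α} {n : ℕ} : SatChain x y n → y ⋖ z → SatChain x z (n + 1)

namespace SatChain

variable {α : Type*} [PartialOrder α]

theorem trans {x y z : α} {n m : ℕ} (h : SatChain x y n) (h' : SatChain y z m) :
    SatChain x z (n + m) := by
  induction h' with
  | nil => exact h
  | snoc _ hcov ih => exact ih.snoc hcov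

theorem exists_of_le [WellFoundedLT α] [WellFoundedGT α] (x y : α) (hxy : x ≤ y) :
    ∃ n, SatChain x y n := by
  induction x using WellFoundedGT.induction with
  | _ x ih =>
    rcases hxy.eq_or_lt with rfl | hlt
    · exact ⟨0, nil⟩
    · obtain ⟨x', hcov, hx'⟩ := exists_covBy_le_of_lt hlt
      obtain ⟨n, hn⟩ := ih x' hcov.lt hx'
      exact ⟨_, (nil.snoc hcov).trans hn⟩

theorem exists_of_lt [WellFoundedLT α] [WellFoundedGT α] {x y : α} (hxy : x < y) :
    ∃ n, SatChain x y (n + 1) := by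
  obtain ⟨n, hn⟩ := exists_of_le x y hxy.le
  cases hn with
  | nil => exact absurd hxy (lt_irrefl _)
  | snoc h hcov => exact ⟨_, h.snoc hcov⟩

/-- A saturated chain from `y` to `z` extends any explicit maximal chain from `x` to `y`,
and the extension still passes through every term of the latter. -/
theorem exists_extend {x y z : α} {n k : ℕ} {c : Fin (n + 1) → α}
    (hc : IsMaxChainFromTo x y n c) (h : SatChain y z k) :
    ∃ d : Fin (n + k + 1) → α, IsMaxChainFromTo x z (n + k) d ∧ ∀ i, ∃ j, d j = c i := by
  induction h with
  | nil => exact ⟨c, hc, fun i => ⟨i, rfl⟩⟩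
  | @snoc z w k _ hcov ih =>
    obtain ⟨d, ⟨h0, hl, hd⟩, hcd⟩ := ih
    refine ⟨Fin.snoc (α := fun _ => α) d w, ⟨?_, ?_, ?_⟩, fun i => ?_⟩
    · rw [← h0]
      exact Fin.snoc_castSucc (α := fun _ => α) w d 0
    · exact Fin.snoc_last (α := fun _ => α) w d
    · refine Fin.lastCases ?_ fun i => ?_
      · have h1 : Fin.snoc (α := fun _ => α) d w (Fin.last (n + k + 1)) = w :=
          Fin.snoc_last (α := fun _ => α) w d
        rw [Fin.snoc_castSucc]
        exact (hl.symm ▸ h1.symm ▸ hcov : d (Fin.last (n + k)) ⋖ _)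
      · rw [Fin.snoc_castSucc, Fin.succ_castSucc, Fin.snoc_castSucc]
        exact hd i
    · obtain ⟨j, hj⟩ := hcd i
      exact ⟨j.castSucc, by rw [← hj]; exact Fin.snoc_castSucc (α := fun _ => α) w d j⟩

end SatChain

/-- If no step `a < b` is collapsed by both `· ⊓ t` and `· ⊔ t`, then every maximal chain is
at most as long as some maximal chain through `t`. -/
theorem exists_maxChain_through {α : Type*} [Lattice α] [BoundedOrder α] [WellFoundedLT α]
    [WellFoundedGT α] (t : α)
    (hmod : ∀ a b : α, a ≤ b → a ⊔ t = b ⊔ t → a ⊓ t = b ⊓ t → a = b)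
    (n : ℕ) (c : Fin (n + 1) → α) (hc : IsMaxChainFromTo ⊥ ⊤ n c) :
    ∃ (m : ℕ) (c' : Fin (m + 1) → α),
      IsMaxChainFromTo ⊥ ⊤ m c' ∧ (∃ i, c' i = t) ∧ n ≤ m := by
  obtain ⟨h0, hl, hcov⟩ := hc
  have key : ∀ i : Fin (n + 1), ∃ p q, SatChain ⊥ (c i ⊓ t) p ∧ SatChain t (c i ⊔ t) q ∧
      (i : ℕ) ≤ p + q := by
    intro i
    induction i using Fin.induction with
    | zero =>
      exact ⟨0, 0, by simpa [h0] using SatChain.nil, by simpa [h0] using SatChain.nil, le_rfl⟩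
    | succ i ih =>
      obtain ⟨p, q, hp, hq, hpq⟩ := ih
      have hle := (hcov i).le
      have hle1 := inf_le_inf_right t hle
      have hle2 := sup_le_sup_right hle t
      rw [Fin.val_castSucc] at hpq
      rw [Fin.val_succ]
      rcases hle1.eq_or_lt with h1 | h1
      · rcases hle2.eq_or_lt with h2 | h2
        · exact absurd (hmod _ _ hle h2 h1) (hcov i).ne
        · obtain ⟨k, hk⟩ := SatChain.exists_of_lt h2
          exact ⟨p, _, h1 ▸ hp, hq.trans hk, by omega⟩
      · obtain ⟨k, hk⟩ := SatChain.exists_of_lt h1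
        obtain ⟨k', hk'⟩ := SatChain.exists_of_le _ _ hle2
        exact ⟨_, _, hp.trans hk, hq.trans hk', by omega⟩
  obtain ⟨p, q, hp, hq, hpq⟩ := key (Fin.last n)
  rw [hl, top_inf_eq] at hp
  rw [hl, top_sup_eq] at hq
  have hnil : IsMaxChainFromTo (⊥ : α) ⊥ 0 fun _ => ⊥ := ⟨rfl, rfl, fun i => i.elim0⟩
  obtain ⟨d, hd, -⟩ := SatChain.exists_extend hnil hp
  obtain ⟨e, he, hde⟩ := SatChain.exists_extend hd hq
  obtain ⟨i, hi⟩ := hde (Fin.last _)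
  exact ⟨_, e, he, ⟨i, hi.trans hd.2.1⟩, by simpa using hpq⟩

/-- Let `R ⊂ S` be an integral FCP extension with t-closure `T`. For any
maximal chain `𝒞` from `R` to `S` there is a maximal chain `𝒞'` from `R` to `S`
containing `T` with `ℓ(𝒞') ≥ ℓ(𝒞)`. -/
theorem stmt_16 {R S : Type*} [CommRing R] [CommRing S] [Algebra R S]
    (hinj : Function.Injective (algebraMap R S))
    (hproper : ¬Function.Surjective (algebraMap R S))
    (hFCP : IsFCPExt R S) (hint : Algebra.IsIntegral R S)
    (T : Subalgebra R S) (hT : IsTClosure T)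
    (n : ℕ) (c : Fin (n + 1) → Subalgebra R S)
    (hc : IsMaxChainFromTo (⊥ : Subalgebra R S) ⊤ n c) :
    ∃ (m : ℕ) (c' : Fin (m + 1) → Subalgebra R S),
      IsMaxChainFromTo (⊥ : Subalgebra R S) ⊤ m c' ∧ (∃ i, c' i = T) ∧ n ≤ m := by
  have := hFCP.wellFoundedGT
  have := hFCP.wellFoundedLT
  exact exists_maxChain_through T
    (fun _ _ hAB hsup hinf => eq_of_sup_eq_of_inf_eq hint hT hAB hsup hinf) n c hc
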